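/- The homomorphism ρ induces an isomorphism of ℂ-algebras from ℂ[X_{j,a} : (j,a) ∈ I]/(L + SR_Q) onto ℂ[ℤ^N]/J, sending the class of X_{j,a} to the class of exp(λ_{j,a}) · single(v_{j,a}). Here L is the ideal generated by the linear-equivalence relations X_{j,a} − X_{n_a+1,a} for 1 ≤ j ≤ n_a and 1 ≤ a ≤ l; SR_Q is the ideal generated by the quantum Stanley–Reisner relations ∏_{j=1}^{n_a+1} X_{j,a} − q_a for 1 ≤ a ≤ l; and J is the ideal of ℂ[ℤ^N] generated by the N logarithmic derivatives of the superpotential W = Σ_{(j,a) ∈ I} exp(λ_{j,a}) · single(v_{j,a}), namely the elements Σ_{(j,a) ∈ I} v_{j,a}^μ · exp(λ_{j,a}) · single(v_{j,a}) for the N coordinates μ of ℤ^N. (This realizes, via the SYZ mirror transformation, the isomorphism between the presentation of the small quantum cohomology ring of ℙ^{n_1} × ⋯ × ℙ^{n_l} and the Jacobian ring of its mirror superpotential.) -/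

import Mathlib

/-- The primitive ray generators of the fan of `ℙ^{n₁} × ⋯ × ℙ^{n_l}`, indexed by
`I = Σ a : Fin l, Fin (n a + 1)`: in the `a`-th block, `v_{j,a}` is the `j`-th
standard basis vector for `j ≤ n_a`, and `v_{n_a+1,a} = −(e₁ + ⋯ + e_{n_a})`. -/
def rayGen {l : ℕ} (n : Fin l → ℕ) (p : Σ a : Fin l, Fin (n a + 1)) :
    ∀ a : Fin l, Fin (n a) → ℤ := fun b m =>
  if b = p.1 then
    (if (p.2 : ℕ) = n p.1 then -1 else if (m : ℕ) = (p.2 : ℕ) then 1 else 0)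
  else 0

/-- The ideal `L` of linear-equivalence relations `X_{j,a} − X_{n_a+1,a}`. -/
noncomputable def Lideal (l : ℕ) (n : Fin l → ℕ) :
    Ideal (MvPolynomial (Σ a : Fin l, Fin (n a + 1)) ℂ) :=
  Ideal.span {f | ∃ (a : Fin l) (j : Fin (n a)),
    f = MvPolynomial.X (⟨a, j.castSucc⟩ : Σ a : Fin l, Fin (n a + 1))
        - MvPolynomial.X (⟨a, Fin.last (n a)⟩ : Σ a : Fin l, Fin (n a + 1))}

/-- The quantum Stanley–Reisner ideal `SR_Q`, generated by
`∏_{j=1}^{n_a+1} X_{j,a} − q_a` with `q_a = exp(Σ_j λ_{j,a})`. -/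
noncomputable def SRQideal (l : ℕ) (n : Fin l → ℕ)
    (lam : (Σ a : Fin l, Fin (n a + 1)) → ℝ) :
    Ideal (MvPolynomial (Σ a : Fin l, Fin (n a + 1)) ℂ) :=
  Ideal.span (Set.range fun a : Fin l =>
    (∏ j : Fin (n a + 1), MvPolynomial.X (⟨a, j⟩ : Σ a : Fin l, Fin (n a + 1)))
      - MvPolynomial.C ((Real.exp (∑ j : Fin (n a + 1), lam ⟨a, j⟩) : ℝ) : ℂ))

/-- The ideal `J` of `ℂ[ℤ^N]` generated by the `N` logarithmic derivatives of the
superpotential `W = Σ_{(j,a)} exp(λ_{j,a}) · single (v_{j,a})`, namely the elements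
`Σ_{(j,a)} v_{j,a}^μ · exp(λ_{j,a}) · single (v_{j,a})` for the `N` coordinates `μ`. -/
noncomputable def Jideal (l : ℕ) (n : Fin l → ℕ)
    (lam : (Σ a : Fin l, Fin (n a + 1)) → ℝ) :
    Ideal (AddMonoidAlgebra ℂ (∀ a : Fin l, Fin (n a) → ℤ)) :=
  Ideal.span {f | ∃ (b : Fin l) (m : Fin (n b)),
    f = ∑ p : Σ a : Fin l, Fin (n a + 1),
      AddMonoidAlgebra.single (rayGen n p)
        ((rayGen n p b m : ℂ) * ((Real.exp (lam p) : ℝ) : ℂ))}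

/-!
The rays of the `a`-th block sum to zero, and all of them but the last ones form a `ℤ`-basis of
`ℤ^N`.  Hence a map of algebras out of the group algebra amounts to a choice of elements `x_{j,a}`
subject only to `∏_j x_{j,a} = q_a` (these are then automatically units), which says that `ρ` is
surjective with kernel `SR_Q`.  Moreover the logarithmic derivative of `W` in the coordinate `(j,a)`
is `ρ (X_{j,a} - X_{n_a+1,a})`, so `ρ` carries `L` onto `J`.
-/

open AddMonoidAlgebra

section GeneralAlgebra

variable {R : Type*} [CommSemiring R]

theorem exists_quotient_sup_algEquiv {S T : Type*} [CommRing S] [CommRing T] [Algebra R S]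
    [Algebra R T] {f : S →ₐ[R] T} (hf : Function.Surjective f) {I K : Ideal S} {J : Ideal T}
    (hK : RingHom.ker f = K) (hJ : I.map f = J) :
    ∃ e : (S ⧸ (I ⊔ K)) ≃ₐ[R] T ⧸ J,
      ∀ s, e (Ideal.Quotient.mk (I ⊔ K) s) = Ideal.Quotient.mk J (f s) := by
  let g : S →ₐ[R] T ⧸ J := (Ideal.Quotient.mkₐ R J).comp f
  have hg : Function.Surjective g := Ideal.Quotient.mk_surjective.comp hf
  have ker_g : I ⊔ K = RingHom.ker g := by
    calc I ⊔ K = (I.map f).comap f := by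
          rw [Ideal.comap_map_of_surjective' f hf, hK]
      _ = RingHom.ker g := by
          ext s
          simp [g, hJ, RingHom.mem_ker, Ideal.Quotient.eq_zero_iff_mem]
  exact ⟨(Ideal.quotientEquivAlgOfEq R ker_g).trans (Ideal.quotientKerAlgEquivOfSurjective hg),
    fun _ => rfl⟩

theorem eq_of_prod_eq_of_forall_ne_eq {κ A : Type*} [Fintype κ] [CommMonoid A] {x y : κ → A}
    (hy : ∀ i, IsUnit (y i)) (hprod : ∏ i, x i = ∏ i, y i) (k : κ)
    (hne : ∀ i, i ≠ k → x i = y i) : x k = y k := by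
  classical
  have hrest : ∏ i ∈ {k}ᶜ, x i = ∏ i ∈ {k}ᶜ, y i :=
    Finset.prod_congr rfl fun i hi => hne i (by simpa using hi)
  rw [Fintype.prod_eq_mul_prod_compl k, Fintype.prod_eq_mul_prod_compl k, hrest] at hprod
  exact (IsUnit.prod_iff.2 fun i _ => hy i).mul_right_cancel hprod

variable {M : Type*}

theorem exists_algHom_single_basis_eq [AddCommGroup M] {ι A : Type*} [CommRing A] [Algebra R A]
    (b : Module.Basis ι ℤ M) (u : ι → Aˣ) :
    ∃ F : AddMonoidAlgebra R M →ₐ[R] A, ∀ i r, F (single (b i) r) = r • (u i : A) := by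
  let φ : M →+ Additive Aˣ := (b.constr ℤ fun i => Additive.ofMul (u i)).toAddMonoidHom
  refine ⟨AddMonoidAlgebra.lift R A M
    ((Units.coeHom A).comp (AddMonoidHom.toMultiplicativeLeft φ)), fun i r => ?_⟩
  simp [φ, AddMonoidAlgebra.lift_single]

theorem aeval_single_surjective [AddCommMonoid M] {σ : Type*} {v : σ → M} {c : σ → R}
    (hv : AddSubmonoid.closure (Set.range v) = ⊤) (hc : ∀ p, IsUnit (c p)) :
    Function.Surjective (MvPolynomial.aeval (R := R) fun p => single (v p) (c p)) := by
  set f := MvPolynomial.aeval (R := R) fun p => single (v p) (c p)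
  have single_one_mem (m : M) : single m (1 : R) ∈ f.range := by
    have hm : m ∈ AddSubmonoid.closure (Set.range v) := hv ▸ AddSubmonoid.mem_top m
    induction hm using AddSubmonoid.closure_induction with
    | mem _ hm =>
      obtain ⟨p, rfl⟩ := hm
      obtain ⟨d, hd⟩ := (hc p).exists_left_inv
      exact ⟨d • MvPolynomial.X p, by simp [f, hd]⟩
    | zero => exact one_mem _
    | add m m' _ _ hm hm' => simpa using mul_mem hm hm'
  intro y
  induction y using AddMonoidAlgebra.induction_on with
  | of m => exact single_one_mem m
  | add y z hy hz => exact f.range.add_mem hy hz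
  | smul r y hy => exact f.range.smul_mem hy r

end GeneralAlgebra

section Rays

variable {l : ℕ} {n : Fin l → ℕ}

theorem rayGen_castSucc (a : Fin l) (j : Fin (n a)) :
    rayGen n ⟨a, j.castSucc⟩ = Pi.single a (Pi.single j 1) := by
  funext b k
  obtain rfl | hb := eq_or_ne b a
  · simp [rayGen, j.2.ne, Pi.single_apply, Fin.ext_iff]
  · simp [rayGen, hb]

theorem rayGen_last_apply (a b : Fin l) (k : Fin (n b)) :
    rayGen n ⟨a, Fin.last (n a)⟩ b k = if b = a then -1 else 0 := by
  simp [rayGen]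

theorem sum_rayGen (a : Fin l) : ∑ j, rayGen n ⟨a, j⟩ = 0 := by
  funext b k
  obtain rfl | hb := eq_or_ne b a
  · simp [Fin.sum_univ_castSucc, rayGen_castSucc, rayGen_last_apply, Pi.single_apply]
  · simp [rayGen, hb]

/-- The standard `ℤ`-basis of the lattice `ℤ^N`; it consists of the rays other than the last one of
each block. -/
noncomputable def latticeBasis (n : Fin l → ℕ) :
    Module.Basis (Σ a, Fin (n a)) ℤ (∀ a, Fin (n a) → ℤ) :=
  Pi.basis fun a => Pi.basisFun ℤ (Fin (n a))

theorem latticeBasis_apply (a : Fin l) (j : Fin (n a)) :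
    latticeBasis n ⟨a, j⟩ = rayGen n ⟨a, j.castSucc⟩ := by
  simp [latticeBasis, rayGen_castSucc]

theorem neg_rayGen_mem_closure (p : Σ a, Fin (n a + 1)) :
    -rayGen n p ∈ AddSubmonoid.closure (Set.range (rayGen n)) := by
  obtain ⟨a, j⟩ := p
  have neg_eq_sum : -rayGen n ⟨a, j⟩ = ∑ i ∈ {j}ᶜ, rayGen n ⟨a, i⟩ := by
    rw [neg_eq_iff_add_eq_zero, ← Fintype.sum_eq_add_sum_compl j fun i => rayGen n ⟨a, i⟩,
      sum_rayGen]
  rw [neg_eq_sum]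
  exact sum_mem fun i _ => AddSubmonoid.subset_closure ⟨⟨a, i⟩, rfl⟩

theorem addSubgroup_closure_range_rayGen : AddSubgroup.closure (Set.range (rayGen n)) = ⊤ := by
  have range_basis_subset : Set.range (latticeBasis n) ⊆ Set.range (rayGen n) := by
    rintro _ ⟨⟨a, j⟩, rfl⟩
    exact ⟨⟨a, j.castSucc⟩, (latticeBasis_apply a j).symm⟩
  have closure_basis : AddSubgroup.closure (Set.range (latticeBasis n)) = ⊤ := by
    rw [← Submodule.span_int_eq_addSubgroupClosure, (latticeBasis n).span_eq,
      Submodule.top_toAddSubgroup]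
  exact top_unique (closure_basis ▸ AddSubgroup.closure_mono range_basis_subset)

theorem addSubmonoid_closure_range_rayGen : AddSubmonoid.closure (Set.range (rayGen n)) = ⊤ := by
  refine top_unique ?_
  rw [← AddSubgroup.top_toAddSubmonoid, ← addSubgroup_closure_range_rayGen,
    AddSubgroup.closure_toAddSubmonoid, AddSubmonoid.closure_le]
  refine Set.union_subset AddSubmonoid.subset_closure ?_
  rintro v ⟨p, hp⟩
  simpa [hp] using neg_rayGen_mem_closure p

end Rays

section MirrorMap

variable {l : ℕ} {n : Fin l → ℕ} {R : Type*} [CommRing R]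

/-- The ideal `L` of linear-equivalence relations, with coefficients in a commutative ring `R`. -/
noncomputable def linearIdeal (R : Type*) [CommRing R] {l : ℕ} (n : Fin l → ℕ) :
    Ideal (MvPolynomial (Σ a, Fin (n a + 1)) R) :=
  Ideal.span {f | ∃ (a : Fin l) (j : Fin (n a)),
    f = MvPolynomial.X ⟨a, j.castSucc⟩ - MvPolynomial.X ⟨a, Fin.last (n a)⟩}

/-- The quantum Stanley–Reisner ideal over `R`, where arbitrary coefficients `c_{j,a}` take the
place of `exp(λ_{j,a})`, so that `q_a = ∏_j c_{j,a}`. -/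
noncomputable def quantumStanleyReisnerIdeal (c : (Σ a, Fin (n a + 1)) → R) :
    Ideal (MvPolynomial (Σ a, Fin (n a + 1)) R) :=
  Ideal.span (Set.range fun a : Fin l =>
    ∏ j, MvPolynomial.X ⟨a, j⟩ - MvPolynomial.C (∏ j, c ⟨a, j⟩))

/-- The ideal of `R[ℤ^N]` generated by the logarithmic derivatives of the superpotential
`∑ p, c p · single (v p)`. -/
noncomputable def jacobianIdeal (c : (Σ a, Fin (n a + 1)) → R) :
    Ideal (AddMonoidAlgebra R (∀ a, Fin (n a) → ℤ)) :=
  Ideal.span {f | ∃ (b : Fin l) (m : Fin (n b)),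
    f = ∑ p, single (rayGen n p) ((rayGen n p b m : R) * c p)}

/-- The homomorphism `ρ`, with arbitrary coefficients `c p` in place of `exp(λ p)`. -/
noncomputable def mirrorHom (c : (Σ a, Fin (n a + 1)) → R) :
    MvPolynomial (Σ a, Fin (n a + 1)) R →ₐ[R] AddMonoidAlgebra R (∀ a, Fin (n a) → ℤ) :=
  MvPolynomial.aeval fun p => single (rayGen n p) (c p)

variable {c : (Σ a, Fin (n a + 1)) → R}

theorem mirrorHom_X (p : Σ a, Fin (n a + 1)) :
    mirrorHom c (MvPolynomial.X p) = single (rayGen n p) (c p) :=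
  MvPolynomial.aeval_X _ p

theorem mirrorHom_surjective (hc : ∀ p, IsUnit (c p)) : Function.Surjective (mirrorHom c) :=
  aeval_single_surjective addSubmonoid_closure_range_rayGen hc

theorem prod_single_rayGen (c : (Σ a, Fin (n a + 1)) → R) (a : Fin l) :
    ∏ j, single (rayGen n ⟨a, j⟩) (c ⟨a, j⟩) =
      algebraMap R (AddMonoidAlgebra R (∀ a, Fin (n a) → ℤ)) (∏ j, c ⟨a, j⟩) := by
  rw [AddMonoidAlgebra.prod_single, sum_rayGen]
  simp

theorem exists_algHom_single_rayGen_eq {A : Type*} [CommRing A] [Algebra R A]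
    (hc : ∀ p, IsUnit (c p)) {x : (Σ a, Fin (n a + 1)) → A}
    (hx : ∀ a, ∏ j, x ⟨a, j⟩ = algebraMap R A (∏ j, c ⟨a, j⟩)) :
    ∃ F : AddMonoidAlgebra R (∀ a, Fin (n a) → ℤ) →ₐ[R] A,
      ∀ p, F (single (rayGen n p) (c p)) = x p := by
  have isUnit_x (a : Fin l) (j : Fin (n a + 1)) : IsUnit (x ⟨a, j⟩) := by
    have isUnit_prod : IsUnit (∏ j, x ⟨a, j⟩) :=
      hx a ▸ (IsUnit.prod_univ_iff.2 fun j => hc ⟨a, j⟩).map (algebraMap R A)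
    exact IsUnit.prod_univ_iff.1 isUnit_prod j
  choose u hu using fun i : Σ a, Fin (n a) =>
    ((hc ⟨i.1, i.2.castSucc⟩).unit⁻¹.isUnit.map (algebraMap R A)).mul (isUnit_x i.1 i.2.castSucc)
  obtain ⟨F, hF⟩ := exists_algHom_single_basis_eq (R := R) (latticeBasis n) u
  have F_castSucc (a : Fin l) (j : Fin (n a)) :
      F (single (rayGen n ⟨a, j.castSucc⟩) (c ⟨a, j.castSucc⟩)) = x ⟨a, j.castSucc⟩ := by
    rw [← latticeBasis_apply, hF, hu, Algebra.smul_def, ← mul_assoc, ← map_mul,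
      IsUnit.mul_val_inv, map_one, one_mul]
  have F_prod (a : Fin l) :
      ∏ j, F (single (rayGen n ⟨a, j⟩) (c ⟨a, j⟩)) = ∏ j, x ⟨a, j⟩ := by
    rw [← map_prod, prod_single_rayGen, AlgHom.commutes, hx]
  refine ⟨F, fun ⟨a, j⟩ => ?_⟩
  cases j using Fin.lastCases with
  | cast j => exact F_castSucc a j
  | last =>
    refine eq_of_prod_eq_of_forall_ne_eq (isUnit_x a) (F_prod a) _ fun i hi => ?_
    obtain ⟨j, rfl⟩ := Fin.exists_castSucc_eq.2 hi
    exact F_castSucc a j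

theorem quantumStanleyReisnerIdeal_le_ker_mirrorHom (c : (Σ a, Fin (n a + 1)) → R) :
    quantumStanleyReisnerIdeal c ≤ RingHom.ker (mirrorHom c) := by
  refine Ideal.span_le.2 ?_
  rintro _ ⟨a, rfl⟩
  rw [SetLike.mem_coe, RingHom.mem_ker, map_sub, map_prod, sub_eq_zero]
  simp only [mirrorHom_X, prod_single_rayGen]
  exact ((mirrorHom c).commutes _).symm

theorem ker_mirrorHom (hc : ∀ p, IsUnit (c p)) :
    RingHom.ker (mirrorHom c) = quantumStanleyReisnerIdeal c := by
  refine le_antisymm (fun f hf => ?_) (quantumStanleyReisnerIdeal_le_ker_mirrorHom c)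
  let π := Ideal.Quotient.mkₐ R (quantumStanleyReisnerIdeal c)
  have prod_π_X (a : Fin l) :
      ∏ j, π (MvPolynomial.X ⟨a, j⟩) = algebraMap R _ (∏ j, c ⟨a, j⟩) := by
    rw [← map_prod, ← π.commutes]
    exact Ideal.Quotient.eq.2 (Ideal.subset_span ⟨a, rfl⟩)
  obtain ⟨F, hF⟩ :=
    exists_algHom_single_rayGen_eq (x := fun p => π (MvPolynomial.X p)) hc prod_π_X
  have F_comp : F.comp (mirrorHom c) = π :=
    MvPolynomial.algHom_ext fun p => (congrArg F (mirrorHom_X p)).trans (hF p)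
  refine Ideal.Quotient.eq_zero_iff_mem.1 ?_
  calc π f = F (mirrorHom c f) := (DFunLike.congr_fun F_comp f).symm
    _ = 0 := by rw [RingHom.mem_ker.1 hf, map_zero]

theorem sum_rayGen_mul_single_eq_mirrorHom (c : (Σ a, Fin (n a + 1)) → R) (b : Fin l)
    (m : Fin (n b)) :
    ∑ p, single (rayGen n p) ((rayGen n p b m : R) * c p) =
      mirrorHom c (MvPolynomial.X ⟨b, m.castSucc⟩ - MvPolynomial.X ⟨b, Fin.last (n b)⟩) := by
  have other_block (a : Fin l) (hab : a ≠ b) :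
      ∑ j, single (rayGen n ⟨a, j⟩) ((rayGen n ⟨a, j⟩ b m : R) * c ⟨a, j⟩) = 0 :=
    Finset.sum_eq_zero fun j _ => by simp [rayGen, hab.symm]
  have other_ray (j : Fin (n b)) (hj : j ≠ m) :
      single (rayGen n ⟨b, j.castSucc⟩)
        ((rayGen n ⟨b, j.castSucc⟩ b m : R) * c ⟨b, j.castSucc⟩) = 0 := by
    simp [rayGen_castSucc, hj.symm]
  rw [Fintype.sum_sigma, Fintype.sum_eq_single b other_block, Fin.sum_univ_castSucc,
    Fintype.sum_eq_single m other_ray, map_sub, mirrorHom_X, mirrorHom_X, rayGen_last_apply]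
  simp [rayGen_castSucc, sub_eq_add_neg]

theorem map_mirrorHom_linearIdeal (c : (Σ a, Fin (n a + 1)) → R) :
    (linearIdeal R n).map (mirrorHom c) = jacobianIdeal c := by
  rw [linearIdeal, jacobianIdeal, Ideal.map_span]
  congr 1
  ext f
  simp only [sum_rayGen_mul_single_eq_mirrorHom, Set.mem_image, Set.mem_ofPred_eq]
  constructor
  · rintro ⟨_, ⟨a, j, rfl⟩, rfl⟩
    exact ⟨a, j, rfl⟩
  · rintro ⟨a, j, rfl⟩
    exact ⟨_, ⟨a, j, rfl⟩, rfl⟩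

theorem stmt9_general (hc : ∀ p, IsUnit (c p)) :
    ∃ e : (MvPolynomial (Σ a, Fin (n a + 1)) R ⧸
          (linearIdeal R n + quantumStanleyReisnerIdeal c))
        ≃ₐ[R] (AddMonoidAlgebra R (∀ a, Fin (n a) → ℤ) ⧸ jacobianIdeal c),
      ∀ p, e (Ideal.Quotient.mk _ (MvPolynomial.X p)) =
        Ideal.Quotient.mk _ (single (rayGen n p) (c p)) := by
  obtain ⟨e, he⟩ := exists_quotient_sup_algEquiv (mirrorHom_surjective hc) (ker_mirrorHom hc)
    (map_mirrorHom_linearIdeal c)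
  exact ⟨e, fun p => (he _).trans (congrArg _ (mirrorHom_X p))⟩

end MirrorMap

theorem SRQideal_eq_quantumStanleyReisnerIdeal (l : ℕ) (n : Fin l → ℕ)
    (lam : (Σ a, Fin (n a + 1)) → ℝ) :
    SRQideal l n lam = quantumStanleyReisnerIdeal fun p => (Real.exp (lam p) : ℂ) := by
  simp only [SRQideal, quantumStanleyReisnerIdeal, Real.exp_sum, Complex.ofReal_prod]

/-- The homomorphism `ρ : ℂ[X_{j,a}] → ℂ[ℤ^N]`,
`X_{j,a} ↦ exp(λ_{j,a}) · single (v_{j,a})`, induces an isomorphism of `ℂ`-algebras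
from `ℂ[X_{j,a}]/(L + SR_Q)` onto `ℂ[ℤ^N]/J`, sending the class of `X_{j,a}` to the
class of `exp(λ_{j,a}) · single (v_{j,a})`.  This realizes, via the SYZ mirror
transformation, the isomorphism between the presentation of the small quantum
cohomology ring of `ℙ^{n₁} × ⋯ × ℙ^{n_l}` and the Jacobian ring of its mirror
superpotential. -/
theorem stmt9 (l : ℕ) (hl : 1 ≤ l) (n : Fin l → ℕ) (hn : ∀ a, 1 ≤ n a)
    (lam : (Σ a : Fin l, Fin (n a + 1)) → ℝ) :
    ∃ e : (MvPolynomial (Σ a : Fin l, Fin (n a + 1)) ℂ ⧸ (Lideal l n + SRQideal l n lam))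
        ≃ₐ[ℂ] (AddMonoidAlgebra ℂ (∀ a : Fin l, Fin (n a) → ℤ) ⧸ Jideal l n lam),
      ∀ p : Σ a : Fin l, Fin (n a + 1),
        e (Ideal.Quotient.mk (Lideal l n + SRQideal l n lam) (MvPolynomial.X p))
          = Ideal.Quotient.mk (Jideal l n lam)
              (AddMonoidAlgebra.single (rayGen n p) ((Real.exp (lam p) : ℝ) : ℂ)) := by
  rw [SRQideal_eq_quantumStanleyReisnerIdeal]
  exact stmt9_general fun p => (Complex.ofReal_ne_zero.2 (Real.exp_ne_zero (lam p))).isUnit
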